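/- There is a constant c > 0 such that for any pair (Γ_i, L_j), any even integer k ≥ 4, and any 0 < δ < 1, with probability at least 1 − δ over a training set S ∼ D^n: sup over w ∈ H(Γ_i, L_j) of | E_{A,t}[ L_{A·D}^{γ_i/2}(h_{A,t}(w)) − L_{A·S}^{γ_i/2}(h_{A,t}(w)) ] | is at most c·( sqrt( (ℓ_{j+1} + exp(−γ_{i+1}²k/c))·(k + ln(e/δ))/n ) + (k + ln(e/δ))/n ). -/

import Mathlib

open MeasureTheory ProbabilityTheory

noncomputable section

/-- Dot product on `Fin m → ℝ`. -/
def dotp {m : ℕ} (w x : Fin m → ℝ) : ℝ := ∑ j, w j * x j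

/-- Margin loss `L_D^γ(w)` of `w` under a distribution `D` on `ℝ^m × ℝ`
(labels are encoded as reals in `{-1,1}`). -/
def lossD {m : ℕ} (D : Measure ((Fin m → ℝ) × ℝ)) (γ : ℝ) (w : Fin m → ℝ) : ℝ :=
  (D {p | p.2 * dotp w p.1 ≤ γ}).toReal

/-- Empirical margin loss `L_S^γ(w)` on a training set `S` of `n` labeled points. -/
def lossS {m n : ℕ} (S : Fin n → (Fin m → ℝ) × ℝ) (γ : ℝ) (w : Fin m → ℝ) : ℝ :=
  (Nat.card {i : Fin n // (S i).2 * dotp w (S i).1 ≤ γ} : ℝ) / n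

/-- The i.i.d. sample measure `D^n` over training sets of size `n`. -/
def trainM {m : ℕ} (D : Measure ((Fin m → ℝ) × ℝ)) (n : ℕ) :
    Measure (Fin n → (Fin m → ℝ) × ℝ) := Measure.pi fun _ => D

/-- Spacing of the rounding grid: `(10 √k)⁻¹`. -/
def gridStep (k : ℕ) : ℝ := (10 * Real.sqrt k)⁻¹

/-- The largest grid point `(1/2)(10√k)⁻¹ + z(10√k)⁻¹ ≤ g`. -/
def roundDown (k : ℕ) (g : ℝ) : ℝ :=
  gridStep k / 2 + (⌊(g - gridStep k / 2) / gridStep k⌋ : ℝ) * gridStep k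

/-- The probability `p(z)` of rounding `g` down, chosen so the rounding is unbiased. -/
def roundProb (k : ℕ) (g : ℝ) : ℝ := 1 - (g - roundDown k g) / gridStep k

/-- Matrix-vector product, `(Aw)_i = ∑ j A i j * w j`. -/
def matVec {k m : ℕ} (A : Fin k → Fin m → ℝ) (w : Fin m → ℝ) : Fin k → ℝ :=
  fun i => ∑ j, A i j * w j

/-- The randomized rounding `h_{A,t}(w)` of `Aw` to the grid. -/
def hRound {k m : ℕ} (A : Fin k → Fin m → ℝ) (t : Fin k → ℝ) (w : Fin m → ℝ) :
    Fin k → ℝ :=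
  fun i => if t i ≤ roundProb k (matVec A w i)
    then roundDown k (matVec A w i)
    else roundDown k (matVec A w i) + gridStep k

/-- The joint law of `(A, t)`: `A` has i.i.d. `N(0,1/k)` entries and `t` has i.i.d.
uniform `[0,1]` coordinates, independent of `A`. -/
def roundMeasure (k m : ℕ) : Measure ((Fin k → Fin m → ℝ) × (Fin k → ℝ)) :=
  (Measure.pi fun _ : Fin k => Measure.pi fun _ : Fin m =>
      gaussianReal 0 (k : NNReal)⁻¹).prod
    (Measure.pi fun _ : Fin k => volume.restrict (Set.Icc (0 : ℝ) 1))

/-- Reduced setup: the data domain `X ⊆ S^d ⊂ ℝ^{d+1}` of unit vectors whose first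
`d` coordinates have norm at most `cγ`. -/
def Xset (d : ℕ) (cγ : ℝ) : Set (Fin (d+1) → ℝ) :=
  {x | (∑ j, x j ^ 2) = 1 ∧ (∑ j : Fin d, x j.castSucc ^ 2) ≤ cγ ^ 2}

/-- Reduced setup: the hypothesis class `H = S^{d-1} × {0} ⊂ ℝ^{d+1}`. -/
def Hset (d : ℕ) : Set (Fin (d+1) → ℝ) :=
  {w | (∑ j, w j ^ 2) = 1 ∧ w (Fin.last d) = 0}

/-- `γ_i = 2^{i-1} n^{-1/2}`. -/
def γlo (n i : ℕ) : ℝ := 2 ^ (i - 1) / Real.sqrt n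

/-- `γ_{i+1} = 2^i n^{-1/2}`. -/
def γhi (n i : ℕ) : ℝ := 2 ^ i / Real.sqrt n

/-- `ℓ_{j+1} = 2^j n^{-1}`. -/
def ellhi (n j : ℕ) : ℝ := 2 ^ j / n

/-- The interval `L_j`: `L_0 = [0, n⁻¹]`, and `L_j = (2^{j-1}/n, 2^j/n]` for `j ≥ 1`. -/
def Lset (n j : ℕ) : Set ℝ :=
  if j = 0 then Set.Icc 0 (n : ℝ)⁻¹
  else Set.Ioc ((2 : ℝ) ^ (j - 1) / n) ((2 : ℝ) ^ j / n)

/-- Margin loss of `h ∈ ℝ^k` under the pushforward distribution `A·D`. -/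
def kLossD {k m : ℕ} (D : Measure ((Fin m → ℝ) × ℝ)) (γ : ℝ) (h : Fin k → ℝ)
    (A : Fin k → Fin m → ℝ) : ℝ :=
  (D {q | q.2 * (∑ r, h r * ∑ s, A r s * q.1 s) ≤ γ}).toReal

/-- Empirical margin loss of `h ∈ ℝ^k` on the transformed training set `A·S`. -/
def kLossS {k m n : ℕ} (S : Fin n → (Fin m → ℝ) × ℝ) (γ : ℝ) (h : Fin k → ℝ)
    (A : Fin k → Fin m → ℝ) : ℝ :=
  (Nat.card {i : Fin n // (S i).2 * (∑ r, h r * ∑ s, A r s * (S i).1 s) ≤ γ} : ℝ) / n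

/-- Specification of the function `φ` from the paper, for margin parameter `γi`:
on `[-cγ, 0]` it equals the probability (over the randomized rounding) that the rounded
margin exceeds `γi/2` given original margin `α`; on `(0, γi]` it interpolates linearly to
`0`; on `(γi, cγ]` it is `0`. -/
def phiSpec (d k : ℕ) (cγ γi : ℝ) (φ : ℝ → ℝ) : Prop :=
  (∀ (w x : Fin (d+1) → ℝ) (y : ℝ), w ∈ Hset d → x ∈ Xset d cγ →
      (y = 1 ∨ y = -1) → y * dotp w x ≤ 0 →
      φ (y * dotp w x) =
        (roundMeasure k (d+1)
          {p | γi / 2 < y * ∑ r, hRound p.1 p.2 w r * ∑ s, p.1 r s * x s}).toReal) ∧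
  (∀ α : ℝ, 0 < α → α ≤ γi → φ α = ((γi - α) / γi) * φ 0) ∧
  (∀ α : ℝ, γi < α → α ≤ cγ → φ α = 0)

/-- Specification of the function `ρ` from the paper, for margin parameter `γi`. -/
def rhoSpec (d k : ℕ) (cγ γi : ℝ) (ρ : ℝ → ℝ) : Prop :=
  (∀ (w x : Fin (d+1) → ℝ) (y : ℝ), w ∈ Hset d → x ∈ Xset d cγ →
      (y = 1 ∨ y = -1) → γi < y * dotp w x →
      ρ (y * dotp w x) =
        (roundMeasure k (d+1)
          {p | y * ∑ r, hRound p.1 p.2 w r * ∑ s, p.1 r s * x s ≤ γi / 2}).toReal) ∧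
  (∀ α : ℝ, 0 < α → α ≤ γi →
      ∀ (w x : Fin (d+1) → ℝ) (y : ℝ), w ∈ Hset d → x ∈ Xset d cγ →
      (y = 1 ∨ y = -1) → y * dotp w x = γi →
      ρ α = (α / γi) *
        (roundMeasure k (d+1)
          {p | y * ∑ r, hRound p.1 p.2 w r * ∑ s, p.1 r s * x s ≤ γi / 2}).toReal) ∧
  (∀ α : ℝ, -cγ ≤ α → α ≤ 0 → ρ α = 0)

theorem lintegral_pi_prod_eq {ι : Type*} [Fintype ι] {E : ι → Type*}
    [∀ i, MeasurableSpace (E i)] (μ : ∀ i, Measure (E i)) [∀ i, IsProbabilityMeasure (μ i)]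
    (f : ∀ i, E i → ENNReal) (hf : ∀ i, Measurable (f i)) :
    ∫⁻ x, ∏ i, f i (x i) ∂Measure.pi μ = ∏ i, ∫⁻ y, f i y ∂μ i := by
  have hind : iIndepFun (fun i (x : ∀ i, E i) => f i (x i)) (Measure.pi μ) :=
    iIndepFun_pi (fun i => (hf i).aemeasurable)
  rw [lintegral_prod_eq_prod_lintegral_of_indepFun Finset.univ _ hind
    (fun i => (hf i).comp (measurable_pi_apply i))]
  refine Finset.prod_congr rfl fun i _ => ?_
  exact (measurePreserving_eval μ i).lintegral_comp (hf i)

/-- The scalar randomized rounding: one coordinate of `hRound`. -/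
def roundCoord (k : ℕ) (t g : ℝ) : ℝ :=
  if t ≤ roundProb k g then roundDown k g else roundDown k g + gridStep k

theorem hRound_apply {k m : ℕ} (A : Fin k → Fin m → ℝ) (t : Fin k → ℝ) (w : Fin m → ℝ)
    (r : Fin k) : hRound A t w r = roundCoord k (t r) (matVec A w r) := rfl

theorem gridStep_pos {k : ℕ} (hk : 0 < k) : 0 < gridStep k := by
  unfold gridStep; positivity

theorem roundDown_le {k : ℕ} (hk : 0 < k) (g : ℝ) : roundDown k g ≤ g := by
  have hs := gridStep_pos hk
  have := Int.floor_le ((g - gridStep k / 2) / gridStep k)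
  rw [le_div_iff₀ hs] at this
  unfold roundDown; linarith

theorem lt_roundDown_add {k : ℕ} (hk : 0 < k) (g : ℝ) : g < roundDown k g + gridStep k := by
  have hs := gridStep_pos hk
  have := Int.lt_floor_add_one ((g - gridStep k / 2) / gridStep k)
  rw [div_lt_iff₀ hs] at this
  unfold roundDown; linarith

theorem roundProb_mem {k : ℕ} (hk : 0 < k) (g : ℝ) : roundProb k g ∈ Set.Icc (0 : ℝ) 1 := by
  have hs := gridStep_pos hk
  have h1 := roundDown_le hk g
  have h2 := lt_roundDown_add hk g
  unfold roundProb
  constructor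
  · rw [sub_nonneg, div_le_one hs]; linarith
  · have : 0 ≤ (g - roundDown k g) / gridStep k := div_nonneg (by linarith) hs.le
    linarith

@[fun_prop]
theorem measurable_roundDown (k : ℕ) : Measurable (roundDown k) := by
  unfold roundDown
  have : Measurable fun g : ℝ => ((⌊(g - gridStep k / 2) / gridStep k⌋ : ℤ) : ℝ) :=
    measurable_from_top.comp (Int.measurable_floor.comp (by fun_prop))
  fun_prop

@[fun_prop]
theorem measurable_roundProb (k : ℕ) : Measurable (roundProb k) := by
  unfold roundProb; fun_prop

theorem measurable_roundCoord (k : ℕ) : Measurable fun p : ℝ × ℝ => roundCoord k p.1 p.2 := by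
  unfold roundCoord
  exact Measurable.ite (measurableSet_le (by fun_prop) (by fun_prop)) (by fun_prop) (by fun_prop)

/-- The uniform distribution on `[0,1]`. -/
abbrev unif : Measure ℝ := volume.restrict (Set.Icc (0 : ℝ) 1)

instance : IsProbabilityMeasure unif := ⟨by simp⟩

theorem integral_roundCoord {k : ℕ} (hk : 0 < k) (g : ℝ) :
    ∫ t, roundCoord k t g ∂unif = g := by
  have hs := gridStep_pos hk
  obtain ⟨h0, h1⟩ := roundProb_mem hk g
  have heq : (fun t => roundCoord k t g) = fun t =>
      (roundDown k g + gridStep k) - (Set.Iic (roundProb k g)).indicator (fun _ => gridStep k) t := by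
    funext t
    by_cases ht : t ≤ roundProb k g <;> simp [roundCoord, ht]
  have hset : Set.Iic (roundProb k g) ∩ Set.Icc 0 1 = Set.Icc 0 (roundProb k g) := by
    ext t; simp only [Set.mem_inter_iff, Set.mem_Iic, Set.mem_Icc]
    constructor
    · rintro ⟨a, b, c⟩; exact ⟨b, a⟩
    · rintro ⟨a, b⟩; exact ⟨b, a, b.trans h1⟩
  rw [heq, integral_sub (integrable_const _)
    ((integrable_const _).indicator measurableSet_Iic), integral_indicator_const _ measurableSet_Iic]
  simp only [integral_const, probReal_univ, smul_eq_mul, one_mul]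
  rw [Measure.real, Measure.restrict_apply measurableSet_Iic, hset, Real.volume_Icc,
    ENNReal.toReal_ofReal (by linarith)]
  have : roundProb k g * gridStep k = gridStep k - (g - roundDown k g) := by
    unfold roundProb; field_simp
  linarith

theorem roundCoord_mem (k : ℕ) (t g : ℝ) (hk : 0 < k) :
    roundCoord k t g ∈ Set.Icc (roundDown k g) (roundDown k g + gridStep k) := by
  have hs := gridStep_pos hk
  unfold roundCoord; split_ifs <;> constructor <;> linarith

/-- Hoeffding's lemma for the randomized rounding. -/
theorem lintegral_exp_roundCoord_le {k : ℕ} (hk : 0 < k) (g b : ℝ) :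
    ∫⁻ t, ENNReal.ofReal (Real.exp (b * roundCoord k t g)) ∂unif ≤
      ENNReal.ofReal (Real.exp (b * g + gridStep k ^ 2 * b ^ 2 / 8)) := by
  have hs := gridStep_pos hk
  have hm : Measurable fun t => roundCoord k t g :=
    (measurable_roundCoord k).comp (by fun_prop : Measurable fun t : ℝ => (t, g))
  have hsub := hasSubgaussianMGF_of_mem_Icc (μ := unif) hm.aemeasurable
    (Filter.Eventually.of_forall fun t => roundCoord_mem k t g hk)
  rw [integral_roundCoord hk] at hsub
  have hi := hsub.integrable_exp_mul b
  have hle := hsub.mgf_le b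
  have hc : ∀ t, ENNReal.ofReal (Real.exp (b * roundCoord k t g)) =
      ENNReal.ofReal (Real.exp (b * g)) *
        ENNReal.ofReal (Real.exp (b * (roundCoord k t g - g))) := by
    intro t
    rw [← ENNReal.ofReal_mul (Real.exp_pos _).le, ← Real.exp_add]; ring_nf
  simp_rw [hc]
  rw [lintegral_const_mul _ (by fun_prop), ← ofReal_integral_eq_lintegral_ofReal hi
    (Filter.Eventually.of_forall fun t => (Real.exp_pos _).le), Real.exp_add,
    ENNReal.ofReal_mul (Real.exp_pos _).le]
  gcongr
  refine hle.trans (le_of_eq ?_)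
  congr 1
  simp [abs_of_pos hs]
  ring

theorem integral_exp_neg_mul_sq_gaussianReal (v : NNReal) (hv : v ≠ 0) (a : ℝ) (ha : 0 ≤ a) :
    ∫ x, Real.exp (-a * x ^ 2) ∂gaussianReal 0 v = (Real.sqrt (1 + 2 * a * v))⁻¹ := by
  have hv' : (0 : ℝ) < v := by positivity
  rw [integral_gaussianReal_eq_integral_smul hv]
  have : ∀ x : ℝ, gaussianPDFReal 0 v x • Real.exp (-a * x ^ 2) =
      (Real.sqrt (2 * Real.pi * v))⁻¹ * Real.exp (-(1 / (2 * v) + a) * x ^ 2) := by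
    intro x
    rw [gaussianPDFReal, smul_eq_mul, mul_assoc, ← Real.exp_add]
    congr 2; field_simp; ring
  simp_rw [this]
  rw [integral_const_mul, integral_gaussian, ← Real.sqrt_inv, ← Real.sqrt_inv, ← Real.sqrt_mul (by positivity)]
  congr 1
  field_simp

/-- The law of a row of i.i.d. centered Gaussians of variance `v`. -/
abbrev gaussRow (m : ℕ) (v : NNReal) : Measure (Fin m → ℝ) :=
  Measure.pi fun _ : Fin m => gaussianReal 0 v

theorem iIndepFun_gaussRow (m : ℕ) (v : NNReal) :
    iIndepFun (fun (j : Fin m) (g : Fin m → ℝ) => g j) (gaussRow m v) :=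
  iIndepFun_pi (X := fun _ => id) fun _ => aemeasurable_id

theorem hasLaw_eval_gaussRow (m : ℕ) (v : NNReal) (j : Fin m) :
    HasLaw (fun g : Fin m → ℝ => g j) (gaussianReal 0 v) (gaussRow m v) :=
  (measurePreserving_eval (fun _ : Fin m => gaussianReal 0 v) j).hasLaw

theorem hasGaussianLaw_gaussRow (m : ℕ) (v : NNReal) :
    HasGaussianLaw (fun (g : Fin m → ℝ) j => g j) (gaussRow m v) :=
  iIndepFun.hasGaussianLaw (fun j => (hasLaw_eval_gaussRow m v j).hasGaussianLaw)
    (iIndepFun_gaussRow m v)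

theorem hasGaussianLaw_dotp_pair {m : ℕ} (v : NNReal) (a b : Fin m → ℝ) :
    HasGaussianLaw (fun g : Fin m → ℝ => (dotp g a, dotp g b)) (gaussRow m v) := by
  let L : (Fin m → ℝ) →L[ℝ] ℝ × ℝ :=
    (∑ j, (a j) • ContinuousLinearMap.proj (R := ℝ) (φ := fun _ : Fin m => ℝ) j).prod
      (∑ j, (b j) • ContinuousLinearMap.proj (R := ℝ) (φ := fun _ : Fin m => ℝ) j)
  have hL : (fun g : Fin m → ℝ => (dotp g a, dotp g b)) = fun g => L (fun j => g j) := by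
    funext g; simp [L, dotp, mul_comm]
  rw [hL]
  exact (hasGaussianLaw_gaussRow m v).map_fun L

theorem memLp_eval_gaussRow (m : ℕ) (v : NNReal) (j : Fin m) :
    MemLp (fun g : Fin m → ℝ => g j) 2 (gaussRow m v) :=
  (hasLaw_eval_gaussRow m v j).hasGaussianLaw.memLp_two

theorem covariance_eval_gaussRow (m : ℕ) (v : NNReal) (i j : Fin m) :
    cov[fun g : Fin m → ℝ => g i, fun g => g j; gaussRow m v] = if i = j then (v : ℝ) else 0 := by
  split_ifs with h
  · subst h
    rw [covariance_self (hasLaw_eval_gaussRow m v i).aemeasurable,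
      (hasLaw_eval_gaussRow m v i).variance_eq, variance_id_gaussianReal]
  · exact ((iIndepFun_gaussRow m v).indepFun h).covariance_eq_zero
      (memLp_eval_gaussRow m v i) (memLp_eval_gaussRow m v j)

theorem covariance_dotp_gaussRow {m : ℕ} (v : NNReal) (a b : Fin m → ℝ) :
    cov[fun g : Fin m → ℝ => dotp g a, fun g => dotp g b; gaussRow m v] = v * dotp a b := by
  unfold dotp
  rw [covariance_fun_sum_fun_sum (fun i => (memLp_eval_gaussRow m v i).mul_const _)
    (fun i => (memLp_eval_gaussRow m v i).mul_const _)]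
  simp_rw [covariance_mul_const_left, covariance_mul_const_right, covariance_eval_gaussRow]
  simp [Finset.mul_sum]
  refine Finset.sum_congr rfl fun i _ => by ring

@[fun_prop]
theorem measurable_dotp_left {m : ℕ} (a : Fin m → ℝ) : Measurable fun g => dotp g a := by
  unfold dotp; fun_prop

theorem integral_dotp_gaussRow {m : ℕ} (v : NNReal) (a : Fin m → ℝ) :
    ∫ g, dotp g a ∂gaussRow m v = 0 := by
  unfold dotp
  rw [integral_finsetSum _ fun i _ => ((memLp_eval_gaussRow m v i).integrable (by norm_num)).mul_const _]
  refine Finset.sum_eq_zero fun j _ => ?_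
  rw [integral_mul_const, (hasLaw_eval_gaussRow m v j).integral_eq, integral_id_gaussianReal, zero_mul]

theorem hasLaw_dotp_gaussRow {m : ℕ} (v : NNReal) (a : Fin m → ℝ) :
    HasLaw (fun g => dotp g a) (gaussianReal 0 (v * (dotp a a).toNNReal)) (gaussRow m v) := by
  refine ⟨by fun_prop, ?_⟩
  rw [(hasGaussianLaw_dotp_pair v a a).fst.map_eq_gaussianReal, integral_dotp_gaussRow,
    ← covariance_self (by fun_prop), covariance_dotp_gaussRow,
    Real.toNNReal_mul (NNReal.coe_nonneg v), Real.toNNReal_coe]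

theorem integral_dotp_sq_gaussRow {m : ℕ} (v : NNReal) (a : Fin m → ℝ) :
    ∫ g, dotp g a ^ 2 ∂gaussRow m v = v * dotp a a := by
  rw [← covariance_dotp_gaussRow, covariance_self (by fun_prop),
    variance_of_integral_eq_zero (by fun_prop) (integral_dotp_gaussRow v a)]

theorem integrable_dotp_sq_gaussRow {m : ℕ} (v : NNReal) (a : Fin m → ℝ) :
    Integrable (fun g => dotp g a ^ 2) (gaussRow m v) :=
  (hasGaussianLaw_dotp_pair v a a).fst.memLp_two.integrable_sq

/-- Gaussian expectation of the exponential of a quadratic form in two correlated projections. -/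
theorem lintegral_exp_gaussRow_le {m : ℕ} (v : NNReal) (hv : v ≠ 0) (w x : Fin m → ℝ)
    (hw : dotp w w = 1) (hx : dotp x x = 1) (s κ a : ℝ) (ha : 0 ≤ a)
    (hle : a ≤ s * dotp w x - κ - s ^ 2 * v / 2) :
    ∫⁻ g, ENNReal.ofReal (Real.exp (-s * dotp g w * dotp g x + κ * dotp g x ^ 2)) ∂gaussRow m v ≤
      ENNReal.ofReal ((Real.sqrt (1 + 2 * a * v))⁻¹) := by
  set α := dotp w x with hα
  let z : Fin m → ℝ := fun j => w j - α * x j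
  have hgz : ∀ g, dotp g w = α * dotp g x + dotp g z := by
    intro g
    simp only [dotp, z, Finset.mul_sum, ← Finset.sum_add_distrib]
    refine Finset.sum_congr rfl fun j _ => by ring
  have hxw : dotp x w = α := by rw [hα]; simp [dotp, mul_comm]
  have hxz : dotp x z = 0 := by have := hgz x; rw [hxw, hx] at this; linarith
  have hzx : dotp z x = 0 := by rw [← hxz]; simp [dotp, mul_comm]
  have hwz : dotp w z = 1 - α ^ 2 := by have := hgz w; rw [hw] at this; linarith [sq α]
  have hzz : dotp z z = 1 - α ^ 2 := by
    have := hgz z; rw [hzx] at this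
    rw [← hwz, show dotp w z = dotp z w by simp [dotp, mul_comm]]; linarith
  have hzz0 : 0 ≤ dotp z z := Finset.sum_nonneg fun j _ => mul_self_nonneg _
  have hind : IndepFun (fun g => dotp g x) (fun g => dotp g z) (gaussRow m v) :=
    (hasGaussianLaw_dotp_pair v x z).indepFun_of_covariance_eq_zero
      (by rw [covariance_dotp_gaussRow, hxz, mul_zero])
  have hmap : (gaussRow m v).map (fun g => (dotp g x, dotp g z)) =
      (gaussianReal 0 v).prod (gaussianReal 0 (v * (dotp z z).toNNReal)) := by
    rw [(indepFun_iff_map_prod_eq_prod_map_map (by fun_prop) (by fun_prop)).1 hind,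
      (hasLaw_dotp_gaussRow v x).map_eq, (hasLaw_dotp_gaussRow v z).map_eq, hx]
    simp
  have h1 : ∫⁻ g, ENNReal.ofReal (Real.exp (-s * dotp g w * dotp g x + κ * dotp g x ^ 2))
        ∂gaussRow m v =
      ∫⁻ q : ℝ × ℝ, ENNReal.ofReal (Real.exp (-s * (α * q.1 + q.2) * q.1 + κ * q.1 ^ 2))
        ∂((gaussianReal 0 v).prod (gaussianReal 0 (v * (dotp z z).toNNReal))) := by
    rw [← hmap, lintegral_map (by fun_prop) (by fun_prop)]
    simp_rw [hgz]
  rw [h1, lintegral_prod _ (by fun_prop)]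
  have h2 : ∀ q : ℝ, ∫⁻ y, ENNReal.ofReal (Real.exp (-s * (α * q + y) * q + κ * q ^ 2))
        ∂(gaussianReal 0 (v * (dotp z z).toNNReal)) ≤
      ENNReal.ofReal (Real.exp (-a * q ^ 2)) := by
    intro q
    have e : ∀ y : ℝ, ENNReal.ofReal (Real.exp (-s * (α * q + y) * q + κ * q ^ 2)) =
        ENNReal.ofReal (Real.exp (-(s * α - κ) * q ^ 2)) *
          ENNReal.ofReal (Real.exp ((-s * q) * y)) := by
      intro y
      rw [← ENNReal.ofReal_mul (Real.exp_pos _).le, ← Real.exp_add]; ring_nf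
    simp_rw [e]
    rw [lintegral_const_mul _ (by fun_prop), ← ofReal_integral_eq_lintegral_ofReal
      (integrable_exp_mul_gaussianReal _) (Filter.Eventually.of_forall fun _ => (Real.exp_pos _).le)]
    have hm : ∫ y, Real.exp ((-s * q) * y) ∂(gaussianReal 0 (v * (dotp z z).toNNReal)) =
        Real.exp (v * dotp z z * (-s * q) ^ 2 / 2) := by
      have := congrFun (mgf_id_gaussianReal (μ := 0) (v := v * (dotp z z).toNNReal)) (-s * q)
      simp only [mgf, id] at this
      rw [this]
      simp [Real.coe_toNNReal _ hzz0]
    rw [hm, ← ENNReal.ofReal_mul (Real.exp_pos _).le, ← Real.exp_add]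
    refine ENNReal.ofReal_le_ofReal (Real.exp_le_exp.2 ?_)
    have hv0 : (0 : ℝ) ≤ v := v.2
    have hq : 0 ≤ q ^ 2 := sq_nonneg q
    have : a ≤ s * α - κ - s ^ 2 * v * dotp z z / 2 := by
      have : s ^ 2 * v * dotp z z ≤ s ^ 2 * v * 1 :=
        mul_le_mul_of_nonneg_left (by rw [hzz]; nlinarith [sq_nonneg α]) (by positivity)
      linarith
    nlinarith [mul_le_mul_of_nonneg_right this hq]
  refine (lintegral_mono h2).trans ?_
  rw [← integral_exp_neg_mul_sq_gaussianReal v hv a ha, ofReal_integral_eq_lintegral_ofReal _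
    (Filter.Eventually.of_forall fun _ => (Real.exp_pos _).le)]
  refine Integrable.of_bound (by fun_prop) 1 (Filter.Eventually.of_forall fun q => ?_)
  rw [Real.norm_eq_abs, abs_of_pos (Real.exp_pos _), Real.exp_le_one_iff]
  nlinarith [mul_nonneg ha (sq_nonneg q)]

instance (k m : ℕ) : IsProbabilityMeasure (roundMeasure k m) := by
  unfold roundMeasure; infer_instance

@[fun_prop]
theorem measurable_hRound {k m : ℕ} (w : Fin m → ℝ) :
    Measurable fun p : (Fin k → Fin m → ℝ) × (Fin k → ℝ) => hRound p.1 p.2 w := by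
  refine measurable_pi_lambda _ fun r => ?_
  have : Measurable fun p : (Fin k → Fin m → ℝ) × (Fin k → ℝ) => (p.2 r, matVec p.1 w r) := by
    unfold matVec; fun_prop
  exact (measurable_roundCoord k).comp this

/-- With high probability the rounded hypothesis keeps a margin of at least `γ / 2` on a point
where the original margin is at least `3 γ / 4`. -/
theorem roundMeasure_margin_le {k m : ℕ} (hk : 0 < k) (w x : Fin m → ℝ) (hw : dotp w w = 1)
    (hx : dotp x x = 1) (γ : ℝ) (hγ : 0 < γ) (hγ1 : γ ≤ 1) (hα : 3 / 4 * γ ≤ dotp w x) :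
    roundMeasure k m {p | ∑ r, hRound p.1 p.2 w r * ∑ s, p.1 r s * x s ≤ γ / 2} ≤
      ENNReal.ofReal (Real.exp (-(γ ^ 2 * k / 100))) := by
  have hk0 : (0 : ℝ) < k := by exact_mod_cast hk
  set s : ℝ := k * γ / 10 with hs
  have hs0 : 0 < s := by positivity
  have hstep : gridStep k ^ 2 = 1 / (100 * k) := by
    unfold gridStep; rw [inv_pow, mul_pow, Real.sq_sqrt hk0.le]; norm_num
  set F : (Fin k → Fin m → ℝ) × (Fin k → ℝ) → ENNReal := fun p =>
    ENNReal.ofReal (Real.exp (s * γ / 2)) *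
      ∏ r, ENNReal.ofReal (Real.exp ((-s * dotp (p.1 r) x) * roundCoord k (p.2 r) (dotp (p.1 r) w)))
    with hF
  have hFm : ∀ r, Measurable fun p : (Fin k → Fin m → ℝ) × (Fin k → ℝ) =>
      ENNReal.ofReal (Real.exp ((-s * dotp (p.1 r) x) *
        roundCoord k (p.2 r) (dotp (p.1 r) w))) := by
    intro r
    have h1 : Measurable fun p : (Fin k → Fin m → ℝ) × (Fin k → ℝ) =>
        roundCoord k (p.2 r) (dotp (p.1 r) w) :=
      (measurable_pi_apply r).comp (measurable_hRound w)
    have h2 : Measurable fun p : (Fin k → Fin m → ℝ) × (Fin k → ℝ) => dotp (p.1 r) x :=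
      (measurable_dotp_left x).comp (by fun_prop)
    fun_prop
  have hsub : {p : (Fin k → Fin m → ℝ) × (Fin k → ℝ) |
      ∑ r, hRound p.1 p.2 w r * ∑ s, p.1 r s * x s ≤ γ / 2} ⊆ {p | 1 ≤ F p} := by
    intro p hp
    simp only [Set.mem_ofPred_eq] at hp ⊢
    rw [hF]
    simp only
    rw [← ENNReal.ofReal_prod_of_nonneg fun _ _ => (Real.exp_pos _).le, ← Real.exp_sum,
      ← ENNReal.ofReal_mul (Real.exp_pos _).le, ← Real.exp_add, ENNReal.one_le_ofReal,
      Real.one_le_exp_iff]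
    have : ∑ r, (-s * dotp (p.1 r) x) * roundCoord k (p.2 r) (dotp (p.1 r) w) =
        -s * ∑ r, hRound p.1 p.2 w r * ∑ s, p.1 r s * x s := by
      rw [Finset.mul_sum]
      refine Finset.sum_congr rfl fun r _ => ?_
      rw [hRound_apply]; unfold matVec dotp; ring
    rw [this]
    nlinarith [mul_le_mul_of_nonneg_left hp hs0.le]
  have hmark := mul_meas_ge_le_lintegral₀ (μ := roundMeasure k m) (f := F)
    (Measurable.aemeasurable (by fun_prop)) 1
  rw [one_mul] at hmark
  refine (measure_mono hsub).trans (hmark.trans ?_)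
  have hinner : ∀ A : Fin k → Fin m → ℝ, ∫⁻ t, F (A, t) ∂(Measure.pi fun _ : Fin k => unif) ≤
      ENNReal.ofReal (Real.exp (s * γ / 2)) *
        ∏ r, ENNReal.ofReal (Real.exp (-s * dotp (A r) w * dotp (A r) x +
          gridStep k ^ 2 * s ^ 2 / 8 * dotp (A r) x ^ 2)) := by
    intro A
    simp only [hF]
    have hmr : ∀ r, Measurable fun t => ENNReal.ofReal (Real.exp ((-s * dotp (A r) x) *
        roundCoord k t (dotp (A r) w))) := by
      intro r
      have : Measurable fun t => roundCoord k t (dotp (A r) w) :=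
        (measurable_roundCoord k).comp (by fun_prop : Measurable fun t : ℝ => (t, dotp (A r) w))
      fun_prop
    have hmp : Measurable fun t : Fin k → ℝ => ∏ r, ENNReal.ofReal (Real.exp
        ((-s * dotp (A r) x) * roundCoord k (t r) (dotp (A r) w))) :=
      Finset.measurable_fun_prod _ fun r _ => (hmr r).comp (measurable_pi_apply r)
    rw [lintegral_const_mul _ hmp, lintegral_pi_prod_eq (fun _ : Fin k => unif)
      (fun r t => ENNReal.ofReal (Real.exp ((-s * dotp (A r) x) *
        roundCoord k t (dotp (A r) w)))) hmr]
    gcongr with r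
    refine (lintegral_exp_roundCoord_le hk _ _).trans (le_of_eq ?_)
    congr 2; ring
  unfold roundMeasure
  rw [lintegral_prod _ (Measurable.aemeasurable (by fun_prop))]
  refine (lintegral_mono hinner).trans ?_
  rw [lintegral_const_mul _ (Finset.measurable_fun_prod _ fun r _ => by
      have h1 : Measurable fun A : Fin k → Fin m → ℝ => dotp (A r) x :=
        (measurable_dotp_left x).comp (by fun_prop)
      have h2 : Measurable fun A : Fin k → Fin m → ℝ => dotp (A r) w :=
        (measurable_dotp_left w).comp (by fun_prop)
      fun_prop),
    lintegral_pi_prod_eq (fun _ : Fin k => gaussRow m (k : NNReal)⁻¹)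
      (fun _ g => ENNReal.ofReal (Real.exp (-s * dotp g w * dotp g x +
          gridStep k ^ 2 * s ^ 2 / 8 * dotp g x ^ 2))) (fun _ => by fun_prop)]
  have hrow := lintegral_exp_gaussRow_le (m := m) (k : NNReal)⁻¹ (by positivity) w x hw hx s
    (gridStep k ^ 2 * s ^ 2 / 8) (69 / 1000 * (k * γ ^ 2)) (by positivity) (by
      have h1 : s * (3 / 4 * γ) ≤ s * dotp w x := mul_le_mul_of_nonneg_left hα hs0.le
      have h2 : gridStep k ^ 2 * s ^ 2 / 8 = k * γ ^ 2 / 80000 := by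
        rw [hstep, hs]; field_simp; ring
      have h3 : s ^ 2 * ((k : NNReal)⁻¹ : NNReal) / 2 = k * γ ^ 2 / 200 := by
        rw [hs]; push_cast; field_simp; ring
      have h4 : s * (3 / 4 * γ) = 3 / 40 * (k * γ ^ 2) := by rw [hs]; ring
      rw [h2, h3]
      nlinarith [mul_pos hk0 (pow_pos hγ 2)])
  have hrow2 : (Real.sqrt (1 + 2 * (69 / 1000 * (k * γ ^ 2)) * ((k : NNReal)⁻¹ : NNReal)))⁻¹ ≤
      Real.exp (-(6 / 100 * γ ^ 2)) := by
    rw [Real.exp_neg]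
    refine inv_anti₀ (Real.exp_pos _) (Real.le_sqrt_of_sq_le ?_)
    have e1 : 2 * (69 / 1000 * (k * γ ^ 2)) * (((k : NNReal)⁻¹ : NNReal) : ℝ) =
        138 / 1000 * γ ^ 2 := by
      push_cast; field_simp; ring
    rw [e1, ← Real.exp_nat_mul]
    have hγ2 : γ ^ 2 ≤ 1 := by nlinarith
    have := Real.abs_exp_sub_one_sub_id_le (x := ((2 : ℕ) : ℝ) * (6 / 100 * γ ^ 2))
      (by rw [abs_of_nonneg (by positivity)]; push_cast; linarith)
    have := (abs_le.1 this).2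
    push_cast at this ⊢
    nlinarith [mul_nonneg (sq_nonneg γ) (sub_nonneg.2 hγ2)]
  have hfin : ENNReal.ofReal (Real.exp (s * γ / 2)) *
      ∏ _r : Fin k, ENNReal.ofReal (Real.exp (-(6 / 100 * γ ^ 2))) =
      ENNReal.ofReal (Real.exp (-(γ ^ 2 * k / 100))) := by
    rw [Finset.prod_const, Finset.card_univ, Fintype.card_fin,
      ← ENNReal.ofReal_pow (Real.exp_pos _).le, ← Real.exp_nat_mul,
      ← ENNReal.ofReal_mul (Real.exp_pos _).le, ← Real.exp_add]
    congr 2; rw [hs]; ring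
  rw [← hfin]
  gcongr
  exact hrow.trans (ENNReal.ofReal_le_ofReal hrow2)

theorem measurable_margin (k m : ℕ) :
    Measurable fun z : ((Fin k → ℝ) × (Fin k → Fin m → ℝ)) × ((Fin m → ℝ) × ℝ) =>
      z.2.2 * ∑ r, z.1.1 r * ∑ s, z.1.2 r s * z.2.1 s := by
  fun_prop

/-- The expected distributional loss of the rounded hypothesis. -/
theorem lintegral_margin_le {d k : ℕ} (hk : 0 < k) (D : Measure ((Fin (d + 1) → ℝ) × ℝ))
    [IsProbabilityMeasure D] (cγ : ℝ) (hD : ∀ᵐ q ∂D, q.1 ∈ Xset d cγ ∧ (q.2 = 1 ∨ q.2 = -1))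
    (w : Fin (d + 1) → ℝ) (hw : w ∈ Hset d) (γ : ℝ) (hγ : 0 < γ) (hγ1 : γ ≤ 1) :
    ∫⁻ p, D {q | q.2 * (∑ r, hRound p.1 p.2 w r * ∑ s, p.1 r s * q.1 s) ≤ γ / 2}
        ∂roundMeasure k (d + 1) ≤
      D {q | q.2 * dotp w q.1 ≤ 3 / 4 * γ} + ENNReal.ofReal (Real.exp (-(γ ^ 2 * k / 100))) := by
  have hww : dotp w w = 1 := by rw [← hw.1]; simp [dotp, sq]
  have hG : Measurable fun z : ((Fin k → Fin (d + 1) → ℝ) × (Fin k → ℝ)) × ((Fin (d + 1) → ℝ) × ℝ) =>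
      z.2.2 * ∑ r, hRound z.1.1 z.1.2 w r * ∑ s, z.1.1 r s * z.2.1 s :=
    (measurable_margin k (d + 1)).comp
      (by fun_prop : Measurable fun z : ((Fin k → Fin (d + 1) → ℝ) × (Fin k → ℝ)) ×
        ((Fin (d + 1) → ℝ) × ℝ) => (((hRound z.1.1 z.1.2 w), z.1.1), z.2))
  have hset := measurableSet_le hG (measurable_const (a := γ / 2))
  have hswap : ∫⁻ p, D {q | q.2 * (∑ r, hRound p.1 p.2 w r * ∑ s, p.1 r s * q.1 s) ≤ γ / 2}
        ∂roundMeasure k (d + 1) =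
      ∫⁻ q, roundMeasure k (d + 1)
        {p | q.2 * (∑ r, hRound p.1 p.2 w r * ∑ s, p.1 r s * q.1 s) ≤ γ / 2} ∂D :=
    (Measure.prod_apply hset).symm.trans (Measure.prod_apply_symm hset)
  rw [hswap]
  have hEm : MeasurableSet {q : (Fin (d + 1) → ℝ) × ℝ | q.2 * dotp w q.1 ≤ 3 / 4 * γ} :=
    measurableSet_le (by unfold dotp; fun_prop) measurable_const
  have hb : ∀ᵐ q ∂D, roundMeasure k (d + 1)
        {p | q.2 * (∑ r, hRound p.1 p.2 w r * ∑ s, p.1 r s * q.1 s) ≤ γ / 2} ≤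
      {q : (Fin (d + 1) → ℝ) × ℝ | q.2 * dotp w q.1 ≤ 3 / 4 * γ}.indicator 1 q +
        ENNReal.ofReal (Real.exp (-(γ ^ 2 * k / 100))) := by
    filter_upwards [hD] with q hq
    by_cases hm : q.2 * dotp w q.1 ≤ 3 / 4 * γ
    · rw [Set.indicator_of_mem (by exact hm)]
      exact prob_le_one.trans le_self_add
    · rw [Set.indicator_of_notMem (by exact hm), zero_add]
      have hyy : q.2 * q.2 = 1 := by rcases hq.2 with h | h <;> rw [h] <;> norm_num
      have hxx : dotp (fun s => q.2 * q.1 s) (fun s => q.2 * q.1 s) = 1 := by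
        rw [← hq.1.1]; unfold dotp
        refine Finset.sum_congr rfl fun s _ => ?_
        linear_combination q.1 s ^ 2 * hyy
      have hwx : dotp w (fun s => q.2 * q.1 s) = q.2 * dotp w q.1 := by
        unfold dotp; rw [Finset.mul_sum]
        exact Finset.sum_congr rfl fun s _ => by ring
      have := roundMeasure_margin_le hk w (fun s => q.2 * q.1 s) hww hxx γ hγ hγ1
        (by rw [hwx]; exact (not_le.1 hm).le)
      convert this using 3 with p
      ext p
      simp only [Finset.mul_sum]
      refine iff_of_eq (congrArg (· ≤ γ / 2) ?_)
      exact Finset.sum_congr rfl fun r _ => Finset.sum_congr rfl fun s _ => by ring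
  refine (lintegral_mono_ae hb).trans ?_
  rw [lintegral_add_right _ measurable_const, lintegral_indicator_one hEm]
  simp

/-- A finite measure on `ℤ` with exponentially decaying weights. -/
def intExpMeasure : Measure ℤ :=
  Measure.count.withDensity fun z => ENNReal.ofReal (Real.exp (-|(z : ℝ)|))

theorem summable_exp_neg_abs_int : Summable fun z : ℤ => Real.exp (-|(z : ℝ)|) := by
  have h : Summable fun n : ℕ => Real.exp (-(n : ℝ)) := Real.summable_exp_neg_nat
  refine Summable.of_nat_of_neg ?_ ?_ <;> simpa using h

theorem intExpMeasure_singleton (z : ℤ) :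
    intExpMeasure {z} = ENNReal.ofReal (Real.exp (-|(z : ℝ)|)) := by
  rw [intExpMeasure, withDensity_apply _ (measurableSet_singleton z), lintegral_singleton]
  simp

instance : IsFiniteMeasure intExpMeasure := by
  refine isFiniteMeasure_withDensity ?_
  rw [lintegral_count, ← ENNReal.ofReal_tsum_of_nonneg (fun _ => (Real.exp_pos _).le)
    summable_exp_neg_abs_int]
  exact ENNReal.ofReal_ne_top

theorem one_le_intExpMeasure_univ : 1 ≤ intExpMeasure.real Set.univ := by
  have h : intExpMeasure.real {0} = 1 := by simp [Measure.real, intExpMeasure_singleton]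
  rw [← h]
  exact measureReal_mono (Set.subset_univ _)

/-- The (unnormalized) prior on grid points. -/
def gridPrior (k : ℕ) : Measure (Fin k → ℤ) := Measure.pi fun _ => intExpMeasure

instance (k : ℕ) : IsFiniteMeasure (gridPrior k) := by unfold gridPrior; infer_instance

theorem gridPrior_univ (k : ℕ) :
    gridPrior k Set.univ = ENNReal.ofReal (intExpMeasure.real Set.univ ^ k) := by
  rw [gridPrior, Measure.pi_univ, Finset.prod_const, Finset.card_univ, Fintype.card_fin,
    ENNReal.ofReal_pow (by positivity), ofReal_measureReal]

theorem gridPrior_singleton {k : ℕ} (z : Fin k → ℤ) :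
    gridPrior k {z} = ENNReal.ofReal (Real.exp (-∑ r, |(z r : ℝ)|)) := by
  rw [gridPrior, Measure.pi_singleton]
  simp_rw [intExpMeasure_singleton]
  rw [← ENNReal.ofReal_prod_of_nonneg fun _ _ => (Real.exp_pos _).le, ← Real.exp_sum,
    Finset.sum_neg_distrib]

/-- The grid point with integer index `z`. -/
def gridPt (k : ℕ) (z : Fin k → ℤ) : Fin k → ℝ := fun r => gridStep k / 2 + z r * gridStep k

theorem exists_gridPt_eq_hRound {k m : ℕ} (hk : 0 < k) (A : Fin k → Fin m → ℝ) (t : Fin k → ℝ)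
    (w : Fin m → ℝ) : ∃ z : Fin k → ℤ, hRound A t w = gridPt k z ∧
      ∑ r, |(z r : ℝ)| ≤ 5 * k * ∑ r, dotp (A r) w ^ 2 + 8 * k := by
  have hk0 : (0 : ℝ) < k := by exact_mod_cast hk
  have hs := gridStep_pos hk
  have key : ∀ r, ∃ z : ℤ, hRound A t w r = gridStep k / 2 + z * gridStep k ∧
      |(z : ℝ)| ≤ 5 * k * dotp (A r) w ^ 2 + 8 := by
    intro r
    set g := dotp (A r) w with hg
    set f : ℤ := ⌊(g - gridStep k / 2) / gridStep k⌋ with hf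
    have h1 : (f : ℝ) ≤ (g - gridStep k / 2) / gridStep k := Int.floor_le _
    have h2 : (g - gridStep k / 2) / gridStep k < f + 1 := Int.lt_floor_add_one _
    have h3 : (g - gridStep k / 2) / gridStep k = 10 * (Real.sqrt k * g) - 1 / 2 := by
      have : 0 < Real.sqrt k := Real.sqrt_pos.2 hk0
      unfold gridStep; field_simp
    have h4 : (Real.sqrt k * g) ^ 2 = k * g ^ 2 := by rw [mul_pow, Real.sq_sqrt hk0.le]
    rw [h3] at h1 h2
    have h5 : 10 * (Real.sqrt k * g) ≤ 5 * (k * g ^ 2) + 5 := by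
      nlinarith [sq_nonneg (Real.sqrt k * g - 1)]
    have h6 : -(5 * (k * g ^ 2) + 5) ≤ 10 * (Real.sqrt k * g) := by
      nlinarith [sq_nonneg (Real.sqrt k * g + 1)]
    rw [hRound_apply]
    change ∃ z : ℤ, roundCoord k (t r) g = _ ∧ _
    unfold roundCoord roundDown
    rw [← hf]
    split_ifs
    · exact ⟨f, rfl, abs_le.2 ⟨by linarith, by linarith⟩⟩
    · refine ⟨f + 1, by push_cast; ring, ?_⟩
      push_cast
      exact abs_le.2 ⟨by linarith, by linarith⟩
  choose z hz hz' using key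
  refine ⟨z, funext hz, (Finset.sum_le_sum fun r _ => hz' r).trans (le_of_eq ?_)⟩
  rw [Finset.sum_add_distrib, ← Finset.mul_sum]
  simp [mul_comm]

theorem measurable_kLossD {k m : ℕ} (D : Measure ((Fin m → ℝ) × ℝ)) [IsProbabilityMeasure D]
    (γ : ℝ) : Measurable fun u : (Fin k → ℝ) × (Fin k → Fin m → ℝ) => kLossD D γ u.1 u.2 :=
  (measurable_measure_prodMk_left (ν := D)
    (measurableSet_le (measurable_margin k m) (measurable_const (a := γ)))).ennreal_toReal

open Classical in

theorem mul_kLossS {k m n : ℕ} (hn : 1 ≤ n) (S : Fin n → (Fin m → ℝ) × ℝ) (γ : ℝ)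
    (h : Fin k → ℝ) (A : Fin k → Fin m → ℝ) :
    n * kLossS S γ h A =
      ∑ i, if (S i).2 * (∑ r, h r * ∑ s, A r s * (S i).1 s) ≤ γ then (1 : ℝ) else 0 := by
  have hn0 : (n : ℝ) ≠ 0 := by positivity
  unfold kLossS
  rw [mul_div_cancel₀ _ hn0, Nat.card_eq_fintype_card, Fintype.card_subtype]
  simp

theorem measurable_kLossS {k m n : ℕ} (hn : 1 ≤ n) (γ : ℝ) :
    Measurable fun v : (Fin n → (Fin m → ℝ) × ℝ) × ((Fin k → ℝ) × (Fin k → Fin m → ℝ)) =>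
      kLossS v.1 γ v.2.1 v.2.2 := by
  classical
  have hn0 : (n : ℝ) ≠ 0 := by positivity
  have : (fun v : (Fin n → (Fin m → ℝ) × ℝ) × ((Fin k → ℝ) × (Fin k → Fin m → ℝ)) =>
      kLossS v.1 γ v.2.1 v.2.2) = fun v => (n : ℝ)⁻¹ * ∑ i, if (v.1 i).2 *
        (∑ r, v.2.1 r * ∑ s, v.2.2 r s * (v.1 i).1 s) ≤ γ then (1 : ℝ) else 0 := by
    funext v
    rw [← mul_kLossS hn, inv_mul_cancel_left₀ hn0]
  rw [this]
  refine Measurable.const_mul (Finset.measurable_fun_sum _ fun i _ => ?_) _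
  exact Measurable.ite (measurableSet_le (by fun_prop) measurable_const)
    measurable_const measurable_const

theorem kLossD_mem {k m : ℕ} (D : Measure ((Fin m → ℝ) × ℝ)) [IsProbabilityMeasure D]
    (γ : ℝ) (h : Fin k → ℝ) (A : Fin k → Fin m → ℝ) : kLossD D γ h A ∈ Set.Icc (0 : ℝ) 1 :=
  ⟨ENNReal.toReal_nonneg, ENNReal.toReal_le_of_le_ofReal zero_le_one (by simpa using prob_le_one)⟩

theorem kLossS_mem {k m n : ℕ} (hn : 1 ≤ n) (S : Fin n → (Fin m → ℝ) × ℝ)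
    (γ : ℝ) (h : Fin k → ℝ) (A : Fin k → Fin m → ℝ) : kLossS S γ h A ∈ Set.Icc (0 : ℝ) 1 := by
  have hn0 : (0 : ℝ) < n := by positivity
  refine ⟨by unfold kLossS; positivity, ?_⟩
  unfold kLossS
  rw [div_le_one hn0]
  have := Finite.card_subtype_le
    (fun i : Fin n => (S i).2 * (∑ r, h r * ∑ s, A r s * (S i).1 s) ≤ γ)
  rw [Nat.card_eq_fintype_card (α := Fin n), Fintype.card_fin] at this
  exact_mod_cast this

/-- The exponent whose exponential has expectation at most one over the sample. -/
def pacExponent {k m n : ℕ} (D : Measure ((Fin m → ℝ) × ℝ)) (γ θ : ℝ)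
    (S : Fin n → (Fin m → ℝ) × ℝ) (h : Fin k → ℝ) (A : Fin k → Fin m → ℝ) : ℝ :=
  θ * (n * kLossS S γ h A) - n * (Real.exp θ - 1) * kLossD D γ h A

theorem lintegral_exp_indicator_le {α : Type*} [MeasurableSpace α] (D : Measure α)
    [IsProbabilityMeasure D] (θ : ℝ) {E : Set α} (hE : MeasurableSet E) :
    ∫⁻ q, ENNReal.ofReal (Real.exp (θ * E.indicator 1 q)) ∂D ≤
      ENNReal.ofReal (Real.exp ((Real.exp θ - 1) * (D E).toReal)) := by
  have h : ∀ q, Real.exp (θ * E.indicator 1 q) =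
      1 + E.indicator (fun _ => Real.exp θ - 1) q := by
    intro q
    by_cases hq : q ∈ E <;> simp [hq]
  have hi : Integrable (fun q => 1 + E.indicator (fun _ => Real.exp θ - 1) q) D :=
    (integrable_const _).add ((integrable_const _).indicator hE)
  simp_rw [h]
  rw [← ofReal_integral_eq_lintegral_ofReal hi
    (Filter.Eventually.of_forall fun q => (Real.exp_pos _).le.trans_eq (h q)),
    integral_add (integrable_const _) ((integrable_const _).indicator hE),
    integral_indicator_const _ hE]
  refine ENNReal.ofReal_le_ofReal ?_
  simp only [integral_const, probReal_univ, smul_eq_mul, one_mul]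
  rw [add_comm, mul_comm]
  exact Real.add_one_le_exp _

theorem lintegral_exp_pacExponent_le {k m n : ℕ} (hn : 1 ≤ n) (D : Measure ((Fin m → ℝ) × ℝ))
    [IsProbabilityMeasure D] (γ θ : ℝ) (h : Fin k → ℝ) (A : Fin k → Fin m → ℝ) :
    ∫⁻ S, ENNReal.ofReal (Real.exp (pacExponent D γ θ S h A)) ∂trainM D n ≤ 1 := by
  classical
  set E : Set ((Fin m → ℝ) × ℝ) := {q | q.2 * (∑ r, h r * ∑ s, A r s * q.1 s) ≤ γ} with hEdef
  have hE : MeasurableSet E := measurableSet_le (by fun_prop) measurable_const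
  have hm1 : Measurable fun q => E.indicator (1 : (Fin m → ℝ) × ℝ → ℝ) q :=
    measurable_one.indicator hE
  have e : ∀ S : Fin n → (Fin m → ℝ) × ℝ,
      ENNReal.ofReal (Real.exp (pacExponent D γ θ S h A)) =
        ENNReal.ofReal (Real.exp (-(n * (Real.exp θ - 1) * (D E).toReal))) *
          ∏ i, ENNReal.ofReal (Real.exp (θ * E.indicator 1 (S i))) := by
    intro S
    rw [← ENNReal.ofReal_prod_of_nonneg fun _ _ => (Real.exp_pos _).le, ← Real.exp_sum,
      ← ENNReal.ofReal_mul (Real.exp_pos _).le, ← Real.exp_add, pacExponent, mul_kLossS hn,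
      ← Finset.mul_sum]
    congr 2
    rw [sub_eq_neg_add]
    rfl
  simp_rw [e]
  have hm2 : Measurable fun S : Fin n → (Fin m → ℝ) × ℝ =>
      ∏ i, ENNReal.ofReal (Real.exp (θ * E.indicator 1 (S i))) :=
    Finset.measurable_fun_prod _ fun i _ => by
      have := hm1.comp (measurable_pi_apply (X := fun _ : Fin n => (Fin m → ℝ) × ℝ) i)
      exact (this.const_mul θ).exp.ennreal_ofReal
  rw [trainM, lintegral_const_mul _ hm2, lintegral_pi_prod_eq (fun _ : Fin n => D)
    (fun _ q => ENNReal.ofReal (Real.exp (θ * E.indicator 1 q)))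
    (fun _ => (hm1.const_mul θ).exp.ennreal_ofReal), Finset.prod_const, Finset.card_univ,
    Fintype.card_fin]
  refine (mul_le_mul_right (pow_le_pow_left₀ (zero_le) (lintegral_exp_indicator_le D θ hE) n) _).trans
    (le_of_eq ?_)
  rw [← ENNReal.ofReal_pow (Real.exp_pos _).le, ← Real.exp_nat_mul,
    ← ENNReal.ofReal_mul (Real.exp_pos _).le, ← Real.exp_add]
  simp [mul_assoc]

/-- The exponential moment functional controlling all rounded hypotheses simultaneously. -/
def pacMoment {m n : ℕ} (k : ℕ) (D : Measure ((Fin m → ℝ) × ℝ)) (γ θ : ℝ)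
    (S : Fin n → (Fin m → ℝ) × ℝ) : ENNReal :=
  ∫⁻ A, ∫⁻ z, ENNReal.ofReal (Real.exp (pacExponent D γ θ S (gridPt k z) A)) ∂gridPrior k
    ∂(Measure.pi fun _ : Fin k => gaussRow m (k : NNReal)⁻¹)

theorem measurable_pacExponent {k m n : ℕ} (hn : 1 ≤ n) (D : Measure ((Fin m → ℝ) × ℝ))
    [IsProbabilityMeasure D] (γ θ : ℝ) :
    Measurable fun v : (Fin n → (Fin m → ℝ) × ℝ) × ((Fin k → ℝ) × (Fin k → Fin m → ℝ)) =>
      pacExponent D γ θ v.1 v.2.1 v.2.2 := by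
  have h1 := measurable_kLossS (k := k) (m := m) hn γ
  have hc : Measurable fun v : (Fin n → (Fin m → ℝ) × ℝ) × ((Fin k → ℝ) × (Fin k → Fin m → ℝ)) =>
      v.2 := measurable_snd
  have h2 := (measurable_kLossD (k := k) D γ).comp hc
  exact ((h1.const_mul _).const_mul _).sub (h2.const_mul _)

theorem measurable_pacExponent_grid {k m n : ℕ} (hn : 1 ≤ n) (D : Measure ((Fin m → ℝ) × ℝ))
    [IsProbabilityMeasure D] (γ θ : ℝ) :
    Measurable fun v : ((Fin n → (Fin m → ℝ) × ℝ) × (Fin k → Fin m → ℝ)) × (Fin k → ℤ) =>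
      ENNReal.ofReal (Real.exp (pacExponent D γ θ v.1.1 (gridPt k v.2) v.1.2)) := by
  have h : Measurable fun v : ((Fin n → (Fin m → ℝ) × ℝ) × (Fin k → Fin m → ℝ)) × (Fin k → ℤ) =>
      (v.1.1, (gridPt k v.2, v.1.2)) := by fun_prop
  exact ((measurable_pacExponent hn D γ θ).comp h).exp.ennreal_ofReal

theorem measurable_pacMoment {m n : ℕ} (k : ℕ) (hn : 1 ≤ n) (D : Measure ((Fin m → ℝ) × ℝ))
    [IsProbabilityMeasure D] (γ θ : ℝ) :
    Measurable fun S : Fin n → (Fin m → ℝ) × ℝ => pacMoment k D γ θ S :=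
  (measurable_pacExponent_grid hn D γ θ).lintegral_prod_right'.lintegral_prod_right'

theorem lintegral_pacMoment_le {m n : ℕ} (k : ℕ) (hn : 1 ≤ n) (D : Measure ((Fin m → ℝ) × ℝ))
    [IsProbabilityMeasure D] (γ θ : ℝ) :
    ∫⁻ S, pacMoment k D γ θ S ∂trainM D n ≤ ENNReal.ofReal (intExpMeasure.real Set.univ ^ k) := by
  have : IsProbabilityMeasure (trainM D n) := by unfold trainM; infer_instance
  have hm := measurable_pacExponent_grid (k := k) hn D γ θ
  unfold pacMoment
  rw [lintegral_lintegral_swap hm.lintegral_prod_right'.aemeasurable]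
  have h : ∀ A : Fin k → Fin m → ℝ, ∫⁻ S, ∫⁻ z,
      ENNReal.ofReal (Real.exp (pacExponent D γ θ S (gridPt k z) A)) ∂gridPrior k ∂trainM D n ≤
      ENNReal.ofReal (intExpMeasure.real Set.univ ^ k) := by
    intro A
    have hA : Measurable fun v : (Fin n → (Fin m → ℝ) × ℝ) × (Fin k → ℤ) => ((v.1, A), v.2) := by
      fun_prop
    have hmA := hm.comp hA
    rw [lintegral_lintegral_swap (f := fun S z => ENNReal.ofReal (Real.exp
      (pacExponent D γ θ S (gridPt k z) A))) hmA.aemeasurable, ← gridPrior_univ]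
    refine (lintegral_mono fun z => lintegral_exp_pacExponent_le hn D γ θ _ A).trans ?_
    simp
  refine (lintegral_mono h).trans ?_
  simp

theorem lintegral_exp_round_le_pacMoment {k m n : ℕ} (hk : 0 < k) (hn : 1 ≤ n)
    (D : Measure ((Fin m → ℝ) × ℝ)) [IsProbabilityMeasure D] (γ θ : ℝ)
    (S : Fin n → (Fin m → ℝ) × ℝ) (w : Fin m → ℝ) :
    ∫⁻ p, ENNReal.ofReal (Real.exp (pacExponent D γ θ S (hRound p.1 p.2 w) p.1 -
        (5 * k * ∑ r, dotp (p.1 r) w ^ 2 + 8 * k))) ∂roundMeasure k m ≤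
      pacMoment k D γ θ S := by
  have hp : ∀ p : (Fin k → Fin m → ℝ) × (Fin k → ℝ),
      ENNReal.ofReal (Real.exp (pacExponent D γ θ S (hRound p.1 p.2 w) p.1 -
        (5 * k * ∑ r, dotp (p.1 r) w ^ 2 + 8 * k))) ≤
      ∫⁻ z, ENNReal.ofReal (Real.exp (pacExponent D γ θ S (gridPt k z) p.1)) ∂gridPrior k := by
    rintro ⟨A, t⟩
    obtain ⟨z, hz, hz'⟩ := exists_gridPt_eq_hRound hk A t w
    refine le_trans ?_ (setLIntegral_le_lintegral {z} _)
    rw [lintegral_singleton, gridPrior_singleton, ← ENNReal.ofReal_mul (Real.exp_pos _).le,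
      ← Real.exp_add]
    refine ENNReal.ofReal_le_ofReal (Real.exp_le_exp.2 ?_)
    simp only [hz]
    linarith
  refine (lintegral_mono hp).trans ?_
  have hA : Measurable fun v : (Fin k → Fin m → ℝ) × (Fin k → ℤ) => ((S, v.1), v.2) := by fun_prop
  have hm := (measurable_pacExponent_grid (k := k) hn D γ θ).comp hA
  unfold roundMeasure pacMoment
  have hm' : Measurable fun p : (Fin k → Fin m → ℝ) × (Fin k → ℝ) =>
      ∫⁻ z, ENNReal.ofReal (Real.exp (pacExponent D γ θ S (gridPt k z) p.1)) ∂gridPrior k :=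
    (Measurable.lintegral_prod_right' hm).comp measurable_fst
  rw [lintegral_prod _ hm'.aemeasurable]
  simp

theorem measurePreserving_row (k m : ℕ) (r : Fin k) :
    MeasurePreserving (fun p : (Fin k → Fin m → ℝ) × (Fin k → ℝ) => p.1 r) (roundMeasure k m)
      (gaussRow m (k : NNReal)⁻¹) :=
  (measurePreserving_eval (fun _ : Fin k => gaussRow m (k : NNReal)⁻¹) r).comp measurePreserving_fst

theorem integrable_sum_dotp_sq {k m : ℕ} (w : Fin m → ℝ) :
    Integrable (fun p : (Fin k → Fin m → ℝ) × (Fin k → ℝ) => ∑ r, dotp (p.1 r) w ^ 2)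
      (roundMeasure k m) :=
  integrable_finsetSum _ fun r _ =>
    (measurePreserving_row k m r).integrable_comp_of_integrable (integrable_dotp_sq_gaussRow _ w)

theorem integral_sum_dotp_sq {k m : ℕ} (hk : 0 < k) (w : Fin m → ℝ) (hw : dotp w w = 1) :
    ∫ p : (Fin k → Fin m → ℝ) × (Fin k → ℝ), ∑ r, dotp (p.1 r) w ^ 2 ∂roundMeasure k m = 1 := by
  have hk0 : (k : ℝ) ≠ 0 := by positivity
  have hr : ∀ r : Fin k, ∫ p : (Fin k → Fin m → ℝ) × (Fin k → ℝ), dotp (p.1 r) w ^ 2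
      ∂roundMeasure k m = (k : ℝ)⁻¹ := by
    intro r
    have hmp := measurePreserving_row k m r
    have := integral_map (μ := roundMeasure k m) hmp.measurable.aemeasurable
      (f := fun g => dotp g w ^ 2) (by fun_prop)
    rw [← this, hmp.map_eq, integral_dotp_sq_gaussRow, hw]
    simp
  have hi : ∀ r ∈ (Finset.univ : Finset (Fin k)), Integrable
      (fun p : (Fin k → Fin m → ℝ) × (Fin k → ℝ) => dotp (p.1 r) w ^ 2) (roundMeasure k m) :=
    fun r _ => (measurePreserving_row k m r).integrable_comp_of_integrable
      (integrable_dotp_sq_gaussRow _ w)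
  rw [integral_finsetSum _ hi]
  simp [hr, hk0]

theorem integrable_kLossD_hRound {k m : ℕ} (D : Measure ((Fin m → ℝ) × ℝ))
    [IsProbabilityMeasure D] (γ : ℝ) (w : Fin m → ℝ) :
    Integrable (fun p => kLossD D γ (hRound p.1 p.2 w) p.1) (roundMeasure k m) := by
  have hc : Measurable fun p : (Fin k → Fin m → ℝ) × (Fin k → ℝ) =>
      (hRound p.1 p.2 w, p.1) := by fun_prop
  exact Integrable.of_mem_Icc 0 1 ((measurable_kLossD D γ).comp hc).aemeasurable
    (Filter.Eventually.of_forall fun p => kLossD_mem D γ _ _)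

theorem integrable_kLossS_hRound {k m n : ℕ} (hn : 1 ≤ n) (S : Fin n → (Fin m → ℝ) × ℝ)
    (γ : ℝ) (w : Fin m → ℝ) :
    Integrable (fun p => kLossS S γ (hRound p.1 p.2 w) p.1) (roundMeasure k m) := by
  have hc : Measurable fun p : (Fin k → Fin m → ℝ) × (Fin k → ℝ) =>
      (S, (hRound p.1 p.2 w, p.1)) := by fun_prop
  exact Integrable.of_mem_Icc 0 1 ((measurable_kLossS hn γ).comp hc).aemeasurable
    (Filter.Eventually.of_forall fun p => kLossS_mem hn S γ _ _)

/-- Change of measure: one-sided deviation bound valid simultaneously for all `w`. -/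
theorem pac_bound {k m n : ℕ} (hk : 0 < k) (hn : 1 ≤ n)
    (D : Measure ((Fin m → ℝ) × ℝ)) [IsProbabilityMeasure D] (γ θ R : ℝ) (hR : 0 < R)
    (S : Fin n → (Fin m → ℝ) × ℝ) (hS : pacMoment k D γ θ S ≤ ENNReal.ofReal R)
    (w : Fin m → ℝ) (hw : dotp w w = 1) :
    θ * (n * ∫ p, kLossS S γ (hRound p.1 p.2 w) p.1 ∂roundMeasure k m) -
      n * (Real.exp θ - 1) * ∫ p, kLossD D γ (hRound p.1 p.2 w) p.1 ∂roundMeasure k m ≤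
      Real.log R + 13 * k := by
  have hiD := integrable_kLossD_hRound (k := k) D γ w
  have hiS := integrable_kLossS_hRound (k := k) hn S γ w
  have hiQ := (integrable_sum_dotp_sq (k := k) w).const_mul (5 * (k : ℝ))
  have hiQ' := hiQ.add (integrable_const (8 * (k : ℝ)))
  have hiP := ((hiS.const_mul (n : ℝ)).const_mul θ).sub (hiD.const_mul (n * (Real.exp θ - 1)))
  set G : (Fin k → Fin m → ℝ) × (Fin k → ℝ) → ℝ := fun p =>
    pacExponent D γ θ S (hRound p.1 p.2 w) p.1 - (5 * k * ∑ r, dotp (p.1 r) w ^ 2 + 8 * k) with hG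
  have hiG : Integrable G (roundMeasure k m) := hiP.sub hiQ'
  have hGint : ∫ p, G p ∂roundMeasure k m =
      θ * (n * ∫ p, kLossS S γ (hRound p.1 p.2 w) p.1 ∂roundMeasure k m) -
      n * (Real.exp θ - 1) * ∫ p, kLossD D γ (hRound p.1 p.2 w) p.1 ∂roundMeasure k m -
      13 * k := by
    have e1 := integral_sub hiP hiQ'
    have e2 := integral_sub ((hiS.const_mul (n : ℝ)).const_mul θ)
      (hiD.const_mul (n * (Real.exp θ - 1)))
    have e3 := integral_add hiQ (integrable_const (μ := roundMeasure k m) (8 * (k : ℝ)))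
    simp only [integral_const_mul, integral_const, probReal_univ, smul_eq_mul, one_mul,
      integral_sum_dotp_sq hk w hw] at e2 e3
    calc ∫ p, G p ∂roundMeasure k m = _ := e1
      _ = _ := by
        refine (congrArg₂ (· - ·) e2 e3).trans ?_
        ring
  have hle : ∫⁻ p, ENNReal.ofReal (Real.exp (G p)) ∂roundMeasure k m ≤ ENNReal.ofReal R :=
    (lintegral_exp_round_le_pacMoment hk hn D γ θ S w).trans hS
  have hnn : 0 ≤ᵐ[roundMeasure k m] fun p => Real.exp (G p) :=
    Filter.Eventually.of_forall fun p => (Real.exp_pos _).le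
  have hsm : AEStronglyMeasurable (fun p => Real.exp (G p)) (roundMeasure k m) :=
    Real.continuous_exp.comp_aestronglyMeasurable hiG.1
  have hiE : Integrable (fun p => Real.exp (G p)) (roundMeasure k m) :=
    (lintegral_ofReal_ne_top_iff_integrable hsm hnn).1 (hle.trans_lt ENNReal.ofReal_lt_top).ne
  have hJ : Real.exp (∫ p, G p ∂roundMeasure k m) ≤ ∫ p, Real.exp (G p) ∂roundMeasure k m :=
    convexOn_exp.map_integral_le Real.continuous_exp.continuousOn isClosed_univ
      (Filter.Eventually.of_forall fun _ => Set.mem_univ _) hiG hiE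
  have hER : ∫ p, Real.exp (G p) ∂roundMeasure k m ≤ R := by
    rw [integral_eq_lintegral_of_nonneg_ae hnn hsm]
    exact ENNReal.toReal_le_of_le_ofReal hR.le hle
  have := (Real.le_log_iff_exp_le hR).2 (hJ.trans hER)
  rw [hGint] at this
  linarith

theorem ofReal_one_sub_le_measure {α : Type*} [MeasurableSpace α] (μ : Measure α)
    [IsProbabilityMeasure μ] (f : α → ENNReal) (hf : Measurable f) (a δ : ℝ) (ha : 0 < a)
    (hδ : 0 < δ) (hint : ∫⁻ x, f x ∂μ ≤ ENNReal.ofReal a) :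
    ENNReal.ofReal (1 - δ) ≤ μ {x | f x ≤ ENNReal.ofReal (a / δ)} := by
  have hs : MeasurableSet {x | f x ≤ ENNReal.ofReal (a / δ)} := measurableSet_le hf measurable_const
  have hc : μ {x | f x ≤ ENNReal.ofReal (a / δ)}ᶜ ≤ ENNReal.ofReal δ := by
    have hsub : {x | f x ≤ ENNReal.ofReal (a / δ)}ᶜ ⊆ {x | ENNReal.ofReal (a / δ) ≤ f x} :=
      fun x hx => (not_le.1 (show ¬ f x ≤ ENNReal.ofReal (a / δ) from hx)).le
    refine (measure_mono hsub).trans ((meas_ge_le_lintegral_div hf.aemeasurable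
      (ENNReal.ofReal_pos.2 (by positivity)).ne' ENNReal.ofReal_ne_top).trans ?_)
    refine ENNReal.div_le_of_le_mul (hint.trans (le_of_eq ?_))
    rw [← ENNReal.ofReal_mul hδ.le, mul_div_cancel₀ _ hδ.ne']
  rw [ENNReal.ofReal_sub _ hδ.le, ENNReal.ofReal_one, tsub_le_iff_right,
    ← prob_add_prob_compl (μ := μ) hs]
  gcongr

theorem exists_good_scale (V B n K : ℝ) (hV : 0 < V) (hB : 0 < B) (hn : 0 < n) (hK : 0 ≤ K) :
    ∃ l : ℝ, 0 < l ∧ l ≤ 1 ∧ l * V + K * B / (l * n) ≤ (K + 1) * (Real.sqrt (V * B / n) + B / n) := by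
  have hBn : 0 < B / n := by positivity
  set T := Real.sqrt (V * B / n) with hT
  have hTpos : 0 < T := Real.sqrt_pos.2 (by positivity)
  have hT2 : T ^ 2 = V * B / n := Real.sq_sqrt (by positivity)
  by_cases h : B / n ≤ V
  · refine ⟨T / V, by positivity, ?_, ?_⟩
    · rw [div_le_one hV]
      refine abs_le_of_sq_le_sq' ?_ hV.le |>.2
      rw [hT2, mul_div_assoc, sq]; gcongr
    · have e1 : T / V * V = T := by field_simp
      have e2 : K * B / (T / V * n) = K * T := by
        have : T * T = V * B / n := by rw [← hT2]; ring
        field_simp at this ⊢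
        linear_combination -K * this
      rw [e1, e2]
      nlinarith [mul_nonneg hK hBn.le]
  · refine ⟨1, one_pos, le_rfl, ?_⟩
    have e : K * B / (1 * n) = K * (B / n) := by rw [one_mul, mul_div_assoc]
    rw [e]
    nlinarith [mul_nonneg hK hTpos.le, not_le.1 h]

theorem measurableSet_domain (d : ℕ) (cγ : ℝ) :
    MeasurableSet {p : (Fin (d + 1) → ℝ) × ℝ | p.1 ∈ Xset d cγ ∧ (p.2 = 1 ∨ p.2 = -1)} := by
  have m1 : Measurable fun x : Fin (d + 1) → ℝ => ∑ j, x j ^ 2 := by fun_prop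
  have m2 : Measurable fun x : Fin (d + 1) → ℝ => ∑ j : Fin d, x j.castSucc ^ 2 := by fun_prop
  have h1 : MeasurableSet (Xset d cγ) :=
    (measurableSet_eq_fun m1 measurable_const).inter (measurableSet_le m2 measurable_const)
  have h2 : MeasurableSet {y : ℝ | y = 1 ∨ y = -1} :=
    (measurableSet_singleton (1 : ℝ)).union (measurableSet_singleton (-1 : ℝ))
  exact (measurable_fst h1).inter (measurable_snd h2)

theorem le_ellhi_of_mem_Lset {n j : ℕ} {x : ℝ} (hx : x ∈ Lset n j) : x ≤ ellhi n j := by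
  unfold Lset at hx
  unfold ellhi
  split_ifs at hx with h
  · subst h; simpa using hx.2
  · exact hx.2

theorem integral_kLossD_hRound_le {d k : ℕ} (hk : 0 < k) (D : Measure ((Fin (d + 1) → ℝ) × ℝ))
    [IsProbabilityMeasure D] (cγ : ℝ) (hD : ∀ᵐ q ∂D, q.1 ∈ Xset d cγ ∧ (q.2 = 1 ∨ q.2 = -1))
    (w : Fin (d + 1) → ℝ) (hw : w ∈ Hset d) (γ : ℝ) (hγ : 0 < γ) (hγ1 : γ ≤ 1) :
    ∫ p, kLossD D (γ / 2) (hRound p.1 p.2 w) p.1 ∂roundMeasure k (d + 1) ≤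
      lossD D (3 / 4 * γ) w + Real.exp (-(γ ^ 2 * k / 100)) := by
  have hi := integrable_kLossD_hRound (k := k) D (γ / 2) w
  rw [integral_eq_lintegral_of_nonneg_ae
    (Filter.Eventually.of_forall fun p => (kLossD_mem D _ _ _).1) hi.1]
  have hl : 0 ≤ lossD D (3 / 4 * γ) w := ENNReal.toReal_nonneg
  refine ENNReal.toReal_le_of_le_ofReal (by positivity) ?_
  rw [ENNReal.ofReal_add hl (Real.exp_pos _).le, lossD, ENNReal.ofReal_toReal (measure_ne_top _ _)]
  refine le_trans (le_of_eq ?_) (lintegral_margin_le hk D cγ hD w hw γ hγ hγ1)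
  refine lintegral_congr fun p => ?_
  rw [kLossD, ENNReal.ofReal_toReal (measure_ne_top _ _)]

/-- The two one-sided change-of-measure bounds combine into a two-sided deviation bound. -/
theorem abs_sub_le_of_pac {X Y n l V K : ℝ} (hn : 0 < n) (hl : 0 < l) (hl1 : l ≤ 1) (hX : 0 ≤ X)
    (hXV : X ≤ V) (h1 : l * (n * Y) - n * (Real.exp l - 1) * X ≤ K)
    (h2 : -l * (n * Y) - n * (Real.exp (-l) - 1) * X ≤ K) :
    |X - Y| ≤ l * V + K / (l * n) := by
  have hln : 0 < l * n := by positivity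
  have e1 := (abs_le.1 (Real.abs_exp_sub_one_sub_id_le (x := l) (by rwa [abs_of_pos hl]))).2
  have e2 := (abs_le.1 (Real.abs_exp_sub_one_sub_id_le (x := -l)
    (by rwa [abs_neg, abs_of_pos hl]))).2
  have key : ∀ e : ℝ, e ≤ l ^ 2 → n * e * X ≤ l * n * (l * V) := by
    intro e he
    have h3 : e * X ≤ l ^ 2 * V :=
      (mul_le_mul_of_nonneg_right he hX).trans (mul_le_mul_of_nonneg_left hXV (sq_nonneg l))
    nlinarith [mul_le_mul_of_nonneg_left h3 hn.le]
  have k1 := key _ e1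
  have k2 := key _ (e2.trans_eq (neg_sq l))
  have hK : l * n * (K / (l * n)) = K := mul_div_cancel₀ _ hln.ne'
  rw [abs_le]
  constructor
  · refine le_of_mul_le_mul_left ?_ hln
    nlinarith
  · refine le_of_mul_le_mul_left ?_ hln
    nlinarith

/-- (Lemma 3.6, "meet in the middle" bound.) With probability `1 - δ`
over the sample, for every `w ∈ H(Γ_i, L_j)` the expected (over the randomized rounding)
gap between the transformed distributional and empirical margin losses at margin `γ_i/2`
is small. -/
theorem statement7 : ∃ cγ c : ℝ, 0 < cγ ∧ cγ ≤ (Real.sqrt 2)⁻¹ ∧ 0 < c ∧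
    ∀ (d n k : ℕ), 1 ≤ n → Even k → 4 ≤ k →
    ∀ i j : ℕ, 1 ≤ i → (2 : ℝ) ^ i ≤ cγ * Real.sqrt n → (2 : ℝ) ^ j ≤ (n : ℝ) →
    ∀ D : Measure ((Fin (d+1) → ℝ) × ℝ), IsProbabilityMeasure D →
    D {p | p.1 ∈ Xset d cγ ∧ (p.2 = 1 ∨ p.2 = -1)} = 1 →
    ∀ δ : ℝ, 0 < δ → δ < 1 →
    ENNReal.ofReal (1 - δ) ≤ trainM D n {S |
      ∀ w, w ∈ Hset d → lossD D (3 / 4 * γlo n i) w ∈ Lset n j →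
      |∫ p, (kLossD D (γlo n i / 2) (hRound p.1 p.2 w) p.1 -
          kLossS S (γlo n i / 2) (hRound p.1 p.2 w) p.1) ∂(roundMeasure k (d+1))| ≤
        c * (Real.sqrt ((ellhi n j + Real.exp (-(γhi n i ^ 2) * k / c)) *
              ((k : ℝ) + Real.log (Real.exp 1 / δ)) / n) +
            ((k : ℝ) + Real.log (Real.exp 1 / δ)) / n)} := by
  set C : ℝ := intExpMeasure.real Set.univ with hC
  have hC1 : 1 ≤ C := one_le_intExpMeasure_univ
  have hlC : 0 ≤ Real.log C := Real.log_nonneg hC1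
  refine ⟨(Real.sqrt 2)⁻¹, 400 + (14 + Real.log C) + 1, by positivity, le_rfl, by positivity, ?_⟩
  set c : ℝ := 400 + (14 + Real.log C) + 1 with hc
  intro d n k hn _ hk4 i j hi hin _ D hDprob hD δ hδ hδ1
  have hk : 0 < k := by omega
  have hn0 : (0 : ℝ) < n := by exact_mod_cast hn
  have hk0 : (0 : ℝ) < k := by exact_mod_cast hk
  have hsn : 0 < Real.sqrt n := Real.sqrt_pos.2 hn0
  have hDae : ∀ᵐ q ∂D, q.1 ∈ Xset d (Real.sqrt 2)⁻¹ ∧ (q.2 = 1 ∨ q.2 = -1) :=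
    (mem_ae_iff_prob_eq_one (measurableSet_domain d _)).2 hD
  set γ := γlo n i with hγdef
  have hγ : 0 < γ := by rw [hγdef, γlo]; positivity
  have hγhi : γhi n i = 2 * γ := by
    obtain ⟨i, rfl⟩ := Nat.exists_eq_add_of_le' hi
    rw [hγdef, γhi, γlo, Nat.add_sub_cancel, pow_succ]; ring
  have hγ1 : γ ≤ 1 := by
    have h1 : γhi n i ≤ (Real.sqrt 2)⁻¹ := by
      rw [γhi, div_le_iff₀ hsn]; exact hin
    have h2 : (Real.sqrt 2)⁻¹ ≤ 1 := inv_le_one_of_one_le₀ (Real.one_le_sqrt.2 (by norm_num))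
    linarith
  set V := ellhi n j + Real.exp (-(γhi n i ^ 2) * k / c) with hV
  have hV0 : 0 < V := by
    have : 0 ≤ ellhi n j := by unfold ellhi; positivity
    positivity
  set B := (k : ℝ) + Real.log (Real.exp 1 / δ) with hB
  have hlogδ : Real.log δ < 0 := Real.log_neg hδ hδ1
  have hlog : Real.log (Real.exp 1 / δ) = 1 - Real.log δ := by
    rw [Real.log_div (Real.exp_pos _).ne' hδ.ne', Real.log_exp]
  have hB0 : 0 < B := by rw [hB, hlog]; linarith
  obtain ⟨l, hl, hl1, hlV⟩ := exists_good_scale V B n (14 + Real.log C) hV0 hB0 hn0 (by positivity)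
  have hprob : IsProbabilityMeasure (trainM D n) := by unfold trainM; infer_instance
  have hm1 := measurable_pacMoment k hn D (γ / 2) l
  have hm2 := measurable_pacMoment k hn D (γ / 2) (-l)
  have hint : ∫⁻ S, (pacMoment k D (γ / 2) l S + pacMoment k D (γ / 2) (-l) S) ∂trainM D n ≤
      ENNReal.ofReal (2 * C ^ k) := by
    rw [lintegral_add_left hm1, two_mul, ENNReal.ofReal_add (by positivity) (by positivity)]
    exact add_le_add (lintegral_pacMoment_le k hn D _ _) (lintegral_pacMoment_le k hn D _ _)
  refine (ofReal_one_sub_le_measure _ _ (hm1.add hm2) (2 * C ^ k) δ (by positivity) hδ hint).trans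
    (measure_mono fun S hS w hw hwL => ?_)
  have hS' : pacMoment k D (γ / 2) l S + pacMoment k D (γ / 2) (-l) S ≤
      ENNReal.ofReal (2 * C ^ k / δ) := hS
  have hR : 0 < 2 * C ^ k / δ := by positivity
  have hww : dotp w w = 1 := by rw [← hw.1]; simp [dotp, sq]
  have p1 := pac_bound hk hn D (γ / 2) l _ hR S (le_self_add.trans hS') w hww
  have p2 := pac_bound hk hn D (γ / 2) (-l) _ hR S (le_add_self.trans hS') w hww
  rw [integral_sub (integrable_kLossD_hRound D _ w) (integrable_kLossS_hRound hn S _ w)]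
  set X := ∫ p, kLossD D (γ / 2) (hRound p.1 p.2 w) p.1 ∂roundMeasure k (d + 1)
  have hX0 : 0 ≤ X := integral_nonneg fun p => (kLossD_mem D _ _ _).1
  have hXV : X ≤ V := by
    refine (integral_kLossD_hRound_le hk D _ hDae w hw γ hγ hγ1).trans ?_
    refine add_le_add (le_ellhi_of_mem_Lset hwL) (Real.exp_le_exp.2 ?_)
    have e : -(γhi n i ^ 2) * k / c = -(γ ^ 2 * k * (4 / c)) := by rw [hγhi]; ring
    have h4 : 4 / c ≤ 1 / 100 := by
      rw [div_le_div_iff₀ (by positivity) (by norm_num)]; linarith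
    rw [e]
    nlinarith [mul_le_mul_of_nonneg_left h4 (by positivity : 0 ≤ γ ^ 2 * k)]
  have hlogR : Real.log (2 * C ^ k / δ) + 13 * k ≤ (14 + Real.log C) * B := by
    rw [Real.log_div (by positivity) hδ.ne', Real.log_mul (by norm_num) (by positivity),
      Real.log_pow, hB, hlog]
    have : Real.log 2 ≤ 1 := by linarith [Real.log_two_lt_d9]
    nlinarith [mul_nonneg hlC (by linarith : 0 ≤ 1 - Real.log δ)]
  refine (abs_sub_le_of_pac hn0 hl hl1 hX0 hXV (p1.trans hlogR) (p2.trans hlogR)).trans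
    (hlV.trans ?_)
  have : 0 ≤ Real.sqrt (V * B / n) + B / n := by positivity
  exact mul_le_mul_of_nonneg_right (by rw [hc]; linarith) this
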